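/- Let a quantum network satisfy Assumptions A1 and A2, and treat each qubit as its own measurement node. Define the qubit characteristic matrix Q, of size N_q × N_q, by Q_{ii} = S(ρ_{q_i}) and Q_{ij} = I_m(q_i; q_j) for i ≠ j, where ρ_{q_i} is the single-qubit reduced state. Then: (i) Q_{ii} = 1 for all i; (ii) for i ≠ j, Q_{ij} = 1 if qubits q_i and q_j come from the same source and Q_{ij} = 0 otherwise; (iii) two rows of Q are equal if and only if the corresponding qubits come from the same source; and (iv) the number of distinct rows of Q equals the number of sources N_s. In particular, Q completely determines the network topology. -/

import Mathlib

open scoped Kronecker Matrix Classical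

noncomputable section

/-- Base-2 Shannon entropy of a finitely supported distribution. -/
def shannon {α : Type*} [Fintype α] (p : α → ℝ) : ℝ :=
  -∑ x, p x * Real.logb 2 (p x)

/-- Base-2 von Neumann entropy of a matrix (junk value `0` if not Hermitian),
computed from the eigenvalues. -/
def vnEntropy {d : Type*} [Fintype d] [DecidableEq d] (ρ : Matrix d d ℂ) : ℝ :=
  if h : ρ.IsHermitian then -∑ k, h.eigenvalues k * Real.logb 2 (h.eigenvalues k) else 0

/-- A projection-valued measure on a finite-dimensional space: a finite family of
mutually orthogonal self-adjoint projections summing to the identity. -/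
structure PVM (ι : Type*) (d : Type*) [Fintype d] [DecidableEq d] where
  [fintype : Fintype ι]
  proj : ι → Matrix d d ℂ
  herm : ∀ a, (proj a).IsHermitian
  idem : ∀ a, proj a * proj a = proj a
  orthogonal : ∀ a b, a ≠ b → proj a * proj b = 0
  complete : ∑ a, proj a = 1

/-- Outcome distribution of a PVM measurement on a state. -/
def pvmProb {ι d : Type*} [Fintype d] [DecidableEq d] (P : PVM ι d)
    (ρ : Matrix d d ℂ) : ι → ℝ :=
  fun a => ((P.proj a * ρ).trace).re

/-- Shannon entropy of the outcome distribution of a PVM measurement. -/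
def pvmEntropy {ι d : Type*} [Fintype d] [DecidableEq d] (P : PVM ι d)
    (ρ : Matrix d d ℂ) : ℝ :=
  letI := P.fintype
  shannon (pvmProb P ρ)

/-- Joint outcome distribution of a product of two local PVMs on a bipartite state. -/
def jointProb {ιA ιB dA dB : Type*} [Fintype dA] [DecidableEq dA] [Fintype dB]
    [DecidableEq dB] (P : PVM ιA dA) (Q : PVM ιB dB)
    (ρ : Matrix (dA × dB) (dA × dB) ℂ) : ιA × ιB → ℝ :=
  fun ab => (((P.proj ab.1 ⊗ₖ Q.proj ab.2) * ρ).trace).re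

/-- Shannon entropy of the joint outcome distribution of a product of two local PVMs. -/
def jointEntropy {ιA ιB dA dB : Type*} [Fintype dA] [DecidableEq dA] [Fintype dB]
    [DecidableEq dB] (P : PVM ιA dA) (Q : PVM ιB dB)
    (ρ : Matrix (dA × dB) (dA × dB) ℂ) : ℝ :=
  letI := P.fintype; letI := Q.fintype
  shannon (jointProb P Q ρ)

/-- Mutual information `H(P_A) + H(P_B) - H(P_{AB})` of the joint outcome distribution
of a product of two local PVMs on a bipartite state. -/
def miOf {ιA ιB dA dB : Type*} [Fintype dA] [DecidableEq dA] [Fintype dB]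
    [DecidableEq dB] (P : PVM ιA dA) (Q : PVM ιB dB)
    (ρ : Matrix (dA × dB) (dA × dB) ℂ) : ℝ :=
  letI := P.fintype; letI := Q.fintype
  shannon (fun a : ιA => ∑ b : ιB, jointProb P Q ρ (a, b)) +
    shannon (fun b : ιB => ∑ a : ιA, jointProb P Q ρ (a, b)) -
    shannon (jointProb P Q ρ)

/-- Measured mutual information: the supremum of `miOf` over all pairs of local PVMs. -/
def measuredMI {dA dB : Type*} [Fintype dA] [DecidableEq dA] [Fintype dB] [DecidableEq dB]
    (ρ : Matrix (dA × dB) (dA × dB) ℂ) : ℝ :=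
  sSup { r : ℝ | ∃ (ιA ιB : Type) (P : PVM ιA dA) (Q : PVM ιB dB), r = miOf P Q ρ }

/-- The computational-basis PVM. -/
def compPVM (d : Type*) [Fintype d] [DecidableEq d] : PVM d d where
  proj x := Matrix.diagonal (fun y => if y = x then (1 : ℂ) else 0)
  herm x := by
    refine Matrix.isHermitian_diagonal_of_self_adjoint _ ?_
    funext y
    by_cases h : y = x <;> simp [h]
  idem x := by
    rw [Matrix.diagonal_mul_diagonal]
    ext y z
    by_cases h : y = z
    · subst h
      by_cases h2 : y = x <;> simp [Matrix.diagonal_apply, h2]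
    · simp [Matrix.diagonal_apply, h]
  orthogonal a b hab := by
    rw [Matrix.diagonal_mul_diagonal]
    have h0 : (fun y => (if y = a then (1:ℂ) else 0) * (if y = b then (1:ℂ) else 0))
        = fun _ => (0:ℂ) := by
      funext y
      by_cases h : y = a <;> by_cases h' : y = b <;> simp_all
    rw [h0, Matrix.diagonal_zero]
  complete := by
    ext y z
    rw [Matrix.sum_apply]
    by_cases h : y = z
    · subst h
      simp [Matrix.diagonal_apply, Matrix.one_apply]
    · simp [Matrix.diagonal_apply, Matrix.one_apply, h]

/-- A two-layer quantum network: qubit `q` comes from source `src q` and is sent to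
measurement node `node q`. -/
structure Net (Nq Ns Nm : ℕ) where
  src : Fin Nq → Fin Ns
  node : Fin Nq → Fin Nm

namespace Net

variable {Nq Ns Nm : ℕ}

/-- Assumption A2: each source sends at most one qubit to any given measurement node. -/
def A2 (N : Net Nq Ns Nm) : Prop :=
  Function.Injective fun q => (N.src q, N.node q)

/-- Assumption A1 (GHZ preparation): every source has at least two qubits.  The GHZ
state preparation itself is hard-coded in `ghzState`. -/
def A1 (N : Net Nq Ns Nm) : Prop :=
  ∀ i : Fin Ns, 2 ≤ Fintype.card {q : Fin Nq // N.src q = i}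

/-- Amplitude of the network state `⊗ᵢ |GHZ_{Λᵢ}⟩`: the amplitude at a bit string `x`
is the product over sources of `1/√2` if `x` is constant on the source, else `0`. -/
def ghzVec (N : Net Nq Ns Nm) : (Fin Nq → Fin 2) → ℂ :=
  fun x => ∏ i : Fin Ns,
    if ∃ b : Fin 2, ∀ q, N.src q = i → x q = b then ((Real.sqrt 2 : ℝ) : ℂ)⁻¹ else 0

/-- The (pure) network state `|ψ⟩⟨ψ|` with `|ψ⟩ = ⊗ᵢ |GHZ_{Λᵢ}⟩`. -/
def ghzState (N : Net Nq Ns Nm) : Matrix (Fin Nq → Fin 2) (Fin Nq → Fin 2) ℂ :=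
  Matrix.of fun x y => N.ghzVec x * star (N.ghzVec y)

/-- Partial trace of a full network state onto the qubits at node `j`. -/
def reduceNode (N : Net Nq Ns Nm) (j : Fin Nm)
    (ρ : Matrix (Fin Nq → Fin 2) (Fin Nq → Fin 2) ℂ) :
    Matrix ({q : Fin Nq // N.node q = j} → Fin 2)
      ({q : Fin Nq // N.node q = j} → Fin 2) ℂ :=
  Matrix.of fun x y => ∑ z : {q : Fin Nq // N.node q ≠ j} → Fin 2,
    ρ (fun q => if h : N.node q = j then x ⟨q, h⟩ else z ⟨q, h⟩)
      (fun q => if h : N.node q = j then y ⟨q, h⟩ else z ⟨q, h⟩)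

/-- Combine assignments on the qubits of nodes `i` and `j` with an assignment on the
remaining qubits into a full assignment. -/
def mergePair (N : Net Nq Ns Nm) (i j : Fin Nm)
    (x : ({q : Fin Nq // N.node q = i} → Fin 2) × ({q : Fin Nq // N.node q = j} → Fin 2))
    (z : {q : Fin Nq // N.node q ≠ i ∧ N.node q ≠ j} → Fin 2) : Fin Nq → Fin 2 :=
  fun q =>
    if h : N.node q = i then x.1 ⟨q, h⟩
    else if h' : N.node q = j then x.2 ⟨q, h'⟩
    else z ⟨q, ⟨h, h'⟩⟩

/-- Partial trace of a full network state onto the qubits at the two nodes `i` and `j`,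
as a bipartite state (first tensor factor: node `i`; second: node `j`). -/
def reducePair (N : Net Nq Ns Nm) (i j : Fin Nm)
    (ρ : Matrix (Fin Nq → Fin 2) (Fin Nq → Fin 2) ℂ) :
    Matrix (({q : Fin Nq // N.node q = i} → Fin 2) × ({q : Fin Nq // N.node q = j} → Fin 2))
      (({q : Fin Nq // N.node q = i} → Fin 2) × ({q : Fin Nq // N.node q = j} → Fin 2)) ℂ :=
  Matrix.of fun x y => ∑ z : {q : Fin Nq // N.node q ≠ i ∧ N.node q ≠ j} → Fin 2,
    ρ (N.mergePair i j x z) (N.mergePair i j y z)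

/-- `N_s^{A_j}`: the number of sources having a qubit at node `j`. -/
def nSrcAt (N : Net Nq Ns Nm) (j : Fin Nm) : ℕ :=
  Fintype.card {i : Fin Ns // ∃ q, N.src q = i ∧ N.node q = j}

/-- `N_s^{A_i,A_j}`: the number of sources having qubits at both nodes `i` and `j`. -/
def nShared (N : Net Nq Ns Nm) (i j : Fin Nm) : ℕ :=
  Fintype.card
    {k : Fin Ns // (∃ q, N.src q = k ∧ N.node q = i) ∧ (∃ q, N.src q = k ∧ N.node q = j)}

/-- The full noisy network state `⊗ᵢ E_γ(|GHZ_{Λᵢ}⟩⟨GHZ_{Λᵢ}|)`, where `E_γ` is the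
depolarizing channel of strength `γ` acting jointly on the qubits of each source. -/
def depolGhzState (N : Net Nq Ns Nm) (γ : ℝ) :
    Matrix (Fin Nq → Fin 2) (Fin Nq → Fin 2) ℂ :=
  Matrix.of fun x y => ∏ i : Fin Ns,
    ((1 - (γ : ℂ)) *
        ((if ∃ b : Fin 2, ∀ q, N.src q = i → x q = b then ((Real.sqrt 2 : ℝ) : ℂ)⁻¹ else 0) *
          star (if ∃ b : Fin 2, ∀ q, N.src q = i → y q = b
            then ((Real.sqrt 2 : ℝ) : ℂ)⁻¹ else 0))
      + (γ : ℂ) * ((2 : ℂ) ^ Fintype.card {q : Fin Nq // N.src q = i})⁻¹ *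
          (if ∀ q, N.src q = i → x q = y q then 1 else 0))

end Net

/-- Two networks (with the same node set) have the same topology if there are bijections
of their qubit sets, source sets and node sets commuting with the source and node maps. -/
def SameTopology {Nq₁ Ns₁ Nq₂ Ns₂ Nm : ℕ} (N₁ : Net Nq₁ Ns₁ Nm) (N₂ : Net Nq₂ Ns₂ Nm) :
    Prop :=
  ∃ (eqv : Fin Nq₁ ≃ Fin Nq₂) (esv : Fin Ns₁ ≃ Fin Ns₂) (emv : Fin Nm ≃ Fin Nm),
    (∀ q, N₂.src (eqv q) = esv (N₁.src q)) ∧ (∀ q, N₂.node (eqv q) = emv (N₁.node q))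

/-- The qubit characteristic matrix of a network in which every qubit is its own
measurement node: single-qubit von Neumann entropies on the diagonal and pairwise
measured mutual informations off the diagonal. -/
def qubitCharMatrix {Nq Ns : ℕ} (N : Net Nq Ns Nq) : Fin Nq → Fin Nq → ℝ :=
  fun i j =>
    if i = j then vnEntropy (N.reduceNode i N.ghzState)
    else measuredMI (N.reducePair i j N.ghzState)

/-!
Both the entropies and the mutual informations are read off from the two-qubit reduced states.

For two qubits of the same source, each marginal is maximally mixed and the bits in the
computational basis always agree, so measuring in that basis gives one bit of mutual information.
No local measurements give more: since `H(B) ≤ H(AB)`, the mutual information is at most `H(A)`,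
and measuring a maximally mixed `d`-dimensional system gives outcome probabilities that are
multiples of `1 / d`. Hence each nonzero one is at least `1 / d`, which yields `H(A) ≤ log₂ d`.

For two qubits of different sources, each has a companion, traced out, that comes from its source
and records its bit. This kills all coherences. The two bits are independent and uniform, so the
pair is in the product state `(1/2) ⊗ (1/2)`, which has no mutual information.

Hence `Q` is the indicator matrix of the same-source relation, and its distinct rows are indexed
by the equivalence classes, that is, by the sources.
-/

lemma shannon_snd_le {α β : Type*} [Fintype α] [Fintype β] {p : α × β → ℝ} (hp : ∀ x, 0 ≤ p x) :
    shannon (fun b => ∑ a, p (a, b)) ≤ shannon p := by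
  unfold shannon
  rw [neg_le_neg_iff, Fintype.sum_prod_type_right]
  refine Finset.sum_le_sum fun b _ => ?_
  rw [Finset.sum_mul]
  refine Finset.sum_le_sum fun a _ => ?_
  have p_le_marginal : p (a, b) ≤ ∑ a', p (a', b) :=
    Finset.single_le_sum (f := fun a' => p (a', b)) (fun _ _ => hp _) (Finset.mem_univ a)
  rcases (hp (a, b)).eq_or_lt with hzero | hpos
  · simp only [← hzero, zero_mul, le_refl]
  · exact mul_le_mul_of_nonneg_left (Real.logb_le_logb_of_le one_lt_two hpos p_le_marginal) hpos.le

lemma shannon_prod {α β : Type*} [Fintype α] [Fintype β] {p : α → ℝ} {q : β → ℝ}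
    (hp : ∑ a, p a = 1) (hq : ∑ b, q b = 1) :
    shannon (fun x : α × β => p x.1 * q x.2) = shannon p + shannon q := by
  have term_eq (a : α) (b : β) : p a * q b * Real.logb 2 (p a * q b) =
      q b * (p a * Real.logb 2 (p a)) + p a * (q b * Real.logb 2 (q b)) := by
    rcases eq_or_ne (p a) 0 with ha | ha
    · simp [ha]
    rcases eq_or_ne (q b) 0 with hb | hb
    · simp [hb]
    rw [Real.logb_mul ha hb]
    ring
  simp only [shannon, Fintype.sum_prod_type, term_eq, Finset.sum_add_distrib, ← Finset.mul_sum,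
    ← Finset.sum_mul, hp, hq]
  ring

lemma shannon_graph {α β : Type*} [Fintype α] [Fintype β] [DecidableEq β] (e : α → β)
    (f : α → ℝ) : shannon (fun x : α × β => if e x.1 = x.2 then f x.1 else 0) = shannon f := by
  simp [shannon, Fintype.sum_prod_type]

lemma shannon_comp_equiv {α β : Type*} [Fintype α] [Fintype β] (e : α ≃ β) (p : β → ℝ) :
    shannon (fun a => p (e a)) = shannon p :=
  congrArg Neg.neg (e.sum_comp fun b => p b * Real.logb 2 (p b))

lemma shannon_uniform (α : Type*) [Fintype α] :
    shannon (fun _ : α => (Fintype.card α : ℝ)⁻¹) = Real.logb 2 (Fintype.card α) := by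
  rcases isEmpty_or_nonempty α with _ | _ <;> simp [shannon, Real.logb_inv]

lemma shannon_le_neg_logb {α : Type*} [Fintype α] {p : α → ℝ} {c : ℝ} (hc : 0 < c)
    (hp : ∀ a, p a = 0 ∨ c ≤ p a) (hsum : ∑ a, p a = 1) : shannon p ≤ -Real.logb 2 c := by
  have weighted : Real.logb 2 c = ∑ a, p a * Real.logb 2 c := by
    rw [← Finset.sum_mul, hsum, one_mul]
  rw [weighted, shannon, neg_le_neg_iff]
  refine Finset.sum_le_sum fun a _ => ?_
  rcases hp a with hzero | hle
  · simp only [hzero, zero_mul, le_refl]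
  · exact mul_le_mul_of_nonneg_left (Real.logb_le_logb_of_le one_lt_two hc hle) (hc.le.trans hle)

/-- The maximally mixed state `1 / d` of a `d`-dimensional system. -/
def maximallyMixed (d : Type*) [Fintype d] [DecidableEq d] : Matrix d d ℂ :=
  (Fintype.card d : ℂ)⁻¹ • 1

lemma maximallyMixed_apply {d : Type*} [Fintype d] [DecidableEq d] (x y : d) :
    maximallyMixed d x y = if x = y then (Fintype.card d : ℂ)⁻¹ else 0 := by
  simp [maximallyMixed, Matrix.one_apply]

lemma isHermitian_maximallyMixed (d : Type*) [Fintype d] [DecidableEq d] :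
    (maximallyMixed d).IsHermitian := by
  simp [Matrix.IsHermitian, maximallyMixed]

lemma trace_maximallyMixed (d : Type*) [Fintype d] [DecidableEq d] [Nonempty d] :
    (maximallyMixed d).trace = 1 := by
  simp [maximallyMixed, Matrix.trace_smul]

lemma maximallyMixed_kronecker (d d' : Type*) [Fintype d] [DecidableEq d] [Fintype d']
    [DecidableEq d'] : maximallyMixed d ⊗ₖ maximallyMixed d' = maximallyMixed (d × d') := by
  simp [maximallyMixed, Matrix.smul_kronecker, Matrix.kronecker_smul, smul_smul, mul_comm]

lemma vnEntropy_maximallyMixed (d : Type*) [Fintype d] [DecidableEq d] :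
    vnEntropy (maximallyMixed d) = Real.logb 2 (Fintype.card d) := by
  have hH := isHermitian_maximallyMixed d
  have eigenvalues_eq : hH.eigenvalues = fun _ => (Fintype.card d : ℝ)⁻¹ := by
    funext k
    have : Nonempty d := ⟨k⟩
    have scalar : maximallyMixed d = algebraMap ℝ _ (Fintype.card d : ℝ)⁻¹ := by
      ext x y
      simp [maximallyMixed_apply, Matrix.algebraMap_matrix_apply]
    have spectrum_eq : spectrum ℝ (maximallyMixed d) = {(Fintype.card d : ℝ)⁻¹} := by
      rw [scalar, spectrum.scalar_eq]
    exact spectrum_eq.subset (hH.eigenvalues_mem_spectrum_real k)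
  rw [vnEntropy, dif_pos hH, ← shannon_uniform d, ← eigenvalues_eq, shannon]

/-- The partial trace of a bipartite state over its second factor. -/
def partialTraceRight {R dA dB : Type*} [AddCommMonoid R] [Fintype dB]
    (ρ : Matrix (dA × dB) (dA × dB) R) : Matrix dA dA R :=
  Matrix.of fun x x' => ∑ y, ρ (x, y) (x', y)

lemma trace_kronecker_one_mul {R dA dB : Type*} [Semiring R] [Fintype dA] [Fintype dB]
    [DecidableEq dB] (M : Matrix dA dA R) (ρ : Matrix (dA × dB) (dA × dB) R) :
    ((M ⊗ₖ (1 : Matrix dB dB R)) * ρ).trace = (M * partialTraceRight ρ).trace := by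
  simp only [Matrix.trace, Matrix.diag, Matrix.mul_apply, Fintype.sum_prod_type,
    Matrix.kroneckerMap_apply, Matrix.one_apply, partialTraceRight, Matrix.of_apply,
    Finset.mul_sum]
  refine Finset.sum_congr rfl fun x _ => ?_
  rw [Finset.sum_comm]
  simp

lemma exists_trace_eq_natCast_of_isIdempotentElem {𝕜 d : Type*} [Field 𝕜] [Fintype d]
    {M : Matrix d d 𝕜} (h : IsIdempotentElem M) : ∃ n : ℕ, M.trace = n := by
  classical
  have h_lin : IsIdempotentElem (Matrix.toLin' M) := by
    rw [IsIdempotentElem, Module.End.mul_eq_comp, ← Matrix.toLin'_mul, h.eq]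
  exact ⟨_, (Matrix.trace_toLin'_eq M).symm.trans
    (LinearMap.IsIdempotentElem.isProj_range _ h_lin).trace⟩

lemma im_trace_mul_eq_zero {d : Type*} [Fintype d] {A B : Matrix d d ℂ} (hA : A.IsHermitian)
    (hB : B.IsHermitian) : (A * B).trace.im = 0 := by
  rw [← Complex.conj_eq_iff_im, starRingEnd_apply, ← Matrix.trace_conjTranspose,
    Matrix.conjTranspose_mul, hA.eq, hB.eq, Matrix.trace_mul_comm]

lemma sum_pvmProb {ι d : Type*} [Fintype d] [DecidableEq d] (P : PVM ι d) {ρ : Matrix d d ℂ}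
    (hρ : ρ.trace = 1) :
    letI := P.fintype
    ∑ a, pvmProb P ρ a = 1 := by
  let := P.fintype
  simp only [pvmProb]
  rw [← Complex.re_sum, ← Matrix.trace_sum, ← Finset.sum_mul, P.complete, one_mul, hρ,
    Complex.one_re]

lemma pvmEntropy_maximallyMixed_le {ι d : Type*} [Fintype d] [DecidableEq d] [Nonempty d]
    (P : PVM ι d) : pvmEntropy P (maximallyMixed d) ≤ Real.logb 2 (Fintype.card d) := by
  let := P.fintype
  have card_pos : (0 : ℝ) < (Fintype.card d : ℝ)⁻¹ := by positivity
  rw [← neg_neg (Real.logb 2 _), ← Real.logb_inv]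
  refine shannon_le_neg_logb card_pos (fun a => ?_) (sum_pvmProb P (trace_maximallyMixed d))
  obtain ⟨n, hn⟩ := exists_trace_eq_natCast_of_isIdempotentElem (P.idem a)
  have trace_eq : (P.proj a * maximallyMixed d).trace =
      (((Fintype.card d : ℝ)⁻¹ * n : ℝ) : ℂ) := by
    rw [maximallyMixed, Matrix.mul_smul, Matrix.mul_one, Matrix.trace_smul, hn, smul_eq_mul]
    push_cast
    rfl
  rw [pvmProb, trace_eq, Complex.ofReal_re]
  rcases n.eq_zero_or_pos with rfl | n_pos
  · left
    simp only [Nat.cast_zero, mul_zero]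
  · right
    exact le_mul_of_one_le_right card_pos.le (by exact_mod_cast n_pos)

section Bipartite

variable {ιA ιB dA dB : Type*} [Fintype dA] [DecidableEq dA] [Fintype dB] [DecidableEq dB]

open scoped ComplexOrder in
lemma jointProb_nonneg (P : PVM ιA dA) (Q : PVM ιB dB) {ρ : Matrix (dA × dB) (dA × dB) ℂ}
    (hρ : ρ.PosSemidef) (x : ιA × ιB) : 0 ≤ jointProb P Q ρ x := by
  set K := P.proj x.1 ⊗ₖ Q.proj x.2 with hK
  have K_herm : Kᴴ = K := by
    rw [hK, Matrix.conjTranspose_kronecker, (P.herm _).eq, (Q.herm _).eq]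
  have K_idem : K * K = K := by
    rw [hK, ← Matrix.mul_kronecker_mul, P.idem, Q.idem]
  have sandwich : (K * ρ).trace = (K * ρ * Kᴴ).trace := by
    rw [K_herm, Matrix.trace_mul_comm (K * ρ) K, ← Matrix.mul_assoc, K_idem]
  rw [jointProb, sandwich]
  exact (Complex.le_def.1 (hρ.mul_mul_conjTranspose_same K).trace_nonneg).1

lemma sum_jointProb_right (P : PVM ιA dA) (Q : PVM ιB dB) (ρ : Matrix (dA × dB) (dA × dB) ℂ)
    (a : ιA) :
    letI := Q.fintype
    ∑ b, jointProb P Q ρ (a, b) = pvmProb P (partialTraceRight ρ) a := by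
  let := Q.fintype
  have sum_proj : ∑ b, P.proj a ⊗ₖ Q.proj b = P.proj a ⊗ₖ 1 := by
    ext ⟨x, y⟩ ⟨x', y'⟩
    simp [← Q.complete, Matrix.sum_apply, Finset.mul_sum]
  simp only [jointProb]
  rw [← Complex.re_sum, ← Matrix.trace_sum, ← Finset.sum_mul, sum_proj, trace_kronecker_one_mul,
    pvmProb]

lemma jointProb_kronecker (P : PVM ιA dA) (Q : PVM ιB dB) {σ : Matrix dA dA ℂ}
    {τ : Matrix dB dB ℂ} (hσ : σ.IsHermitian) (x : ιA × ιB) :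
    jointProb P Q (σ ⊗ₖ τ) x = pvmProb P σ x.1 * pvmProb Q τ x.2 := by
  rw [jointProb, ← Matrix.mul_kronecker_mul, Matrix.trace_kronecker, Complex.mul_re,
    im_trace_mul_eq_zero (P.herm _) hσ, zero_mul, sub_zero, pvmProb, pvmProb]

lemma jointProb_compPVM (ρ : Matrix (dA × dB) (dA × dB) ℂ) (x : dA × dB) :
    jointProb (compPVM dA) (compPVM dB) ρ x = (ρ x x).re := by
  have proj_eq : (compPVM dA).proj x.1 ⊗ₖ (compPVM dB).proj x.2 =
      Matrix.diagonal (fun z => if z = x then 1 else 0) := by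
    simp only [compPVM, Matrix.diagonal_kronecker_diagonal, Prod.ext_iff, ite_and, ite_mul,
      one_mul, zero_mul]
  rw [jointProb, proj_eq]
  simp [Matrix.trace, Matrix.diagonal_mul]

open scoped ComplexOrder in
lemma miOf_le_pvmEntropy (P : PVM ιA dA) (Q : PVM ιB dB) {ρ : Matrix (dA × dB) (dA × dB) ℂ}
    (hρ : ρ.PosSemidef) : miOf P Q ρ ≤ pvmEntropy P (partialTraceRight ρ) := by
  let := P.fintype
  let := Q.fintype
  have snd_le := shannon_snd_le (jointProb_nonneg P Q hρ)
  have fst_eq : (fun a => ∑ b, jointProb P Q ρ (a, b)) = pvmProb P (partialTraceRight ρ) :=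
    funext (sum_jointProb_right P Q ρ)
  rw [miOf, pvmEntropy, ← fst_eq]
  linarith

lemma miOf_kronecker (P : PVM ιA dA) (Q : PVM ιB dB) {σ : Matrix dA dA ℂ} {τ : Matrix dB dB ℂ}
    (hσ : σ.IsHermitian) (hσ₁ : σ.trace = 1) (hτ₁ : τ.trace = 1) :
    miOf P Q (σ ⊗ₖ τ) = 0 := by
  let := P.fintype
  let := Q.fintype
  rw [miOf, funext (jointProb_kronecker P Q hσ)]
  simp only [← Finset.mul_sum, ← Finset.sum_mul, sum_pvmProb P hσ₁, sum_pvmProb Q hτ₁, mul_one,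
    one_mul, shannon_prod (sum_pvmProb P hσ₁) (sum_pvmProb Q hτ₁), sub_self]

lemma miOf_eq_shannon_of_graph [DecidableEq ιB] {P : PVM ιA dA} {Q : PVM ιB dB}
    {ρ : Matrix (dA × dB) (dA × dB) ℂ} (e : ιA ≃ ιB) (f : ιA → ℝ)
    (h : ∀ x, jointProb P Q ρ x = if e x.1 = x.2 then f x.1 else 0) :
    letI := P.fintype
    miOf P Q ρ = shannon f := by
  let := P.fintype
  let := Q.fintype
  have fst_eq (a : ιA) : ∑ b, jointProb P Q ρ (a, b) = f a := by
    simp [h]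
  have snd_eq (b : ιB) : ∑ a, jointProb P Q ρ (a, b) = f (e.symm b) := by
    simp [h, ← Equiv.eq_symm_apply]
  simp only [miOf, fst_eq, snd_eq, shannon_comp_equiv]
  rw [funext h, shannon_graph, add_sub_cancel_right]

end Bipartite

section MeasuredMutualInformation

variable {dA dB : Type} [Fintype dA] [DecidableEq dA] [Fintype dB] [DecidableEq dB]

lemma measuredMI_kronecker {σ : Matrix dA dA ℂ} {τ : Matrix dB dB ℂ} (hσ : σ.IsHermitian)
    (hσ₁ : σ.trace = 1) (hτ₁ : τ.trace = 1) : measuredMI (σ ⊗ₖ τ) = 0 := by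
  refine IsGreatest.csSup_eq ⟨⟨_, _, compPVM dA, compPVM dB, ?_⟩, ?_⟩
  · exact (miOf_kronecker _ _ hσ hσ₁ hτ₁).symm
  · rintro _ ⟨_, _, P, Q, rfl⟩
    exact (miOf_kronecker P Q hσ hσ₁ hτ₁).le

open scoped ComplexOrder in
lemma measuredMI_eq_logb_card [Nonempty dA] {ρ : Matrix (dA × dB) (dA × dB) ℂ}
    (hρ : ρ.PosSemidef) (hmarginal : partialTraceRight ρ = maximallyMixed dA) (e : dA ≃ dB)
    (hdiag : ∀ x, ρ x x = if e x.1 = x.2 then (Fintype.card dA : ℂ)⁻¹ else 0) :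
    measuredMI ρ = Real.logb 2 (Fintype.card dA) := by
  refine IsGreatest.csSup_eq ⟨⟨_, _, compPVM dA, compPVM dB, ?_⟩, ?_⟩
  · rw [miOf_eq_shannon_of_graph e (fun _ => (Fintype.card dA : ℝ)⁻¹) fun x => ?_]
    · exact (shannon_uniform dA).symm
    · rw [jointProb_compPVM, hdiag, apply_ite Complex.re, ← Complex.ofReal_natCast,
        ← Complex.ofReal_inv, Complex.ofReal_re, Complex.zero_re]
  · rintro _ ⟨_, _, P, Q, rfl⟩
    calc miOf P Q ρ ≤ pvmEntropy P (partialTraceRight ρ) := miOf_le_pvmEntropy P Q hρ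
      _ ≤ Real.logb 2 (Fintype.card dA) := hmarginal ▸ pvmEntropy_maximallyMixed_le P

end MeasuredMutualInformation

lemma card_filter_agree_mul {κ α : Type*} [Fintype κ] [DecidableEq κ] [Fintype α]
    [DecidableEq α] (S : Finset κ) (v : κ → α) :
    Finset.card {w : κ → α | ∀ k ∈ S, w k = v k} * Fintype.card α ^ S.card =
      Fintype.card α ^ Fintype.card κ := by
  have filter_eq : Finset.univ.filter (fun w : κ → α => ∀ k ∈ S, w k = v k) =
      Fintype.piFinset fun k => if k ∈ S then {v k} else Finset.univ := by
    ext w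
    simp only [Finset.mem_filter, Finset.mem_univ, true_and, Fintype.mem_piFinset]
    refine forall_congr' fun k => ?_
    split_ifs with hk <;> simp [hk]
  rw [filter_eq, Fintype.card_piFinset]
  simp only [apply_ite Finset.card, Finset.card_singleton, Finset.card_univ]
  rw [Finset.prod_ite, Finset.prod_const_one, one_mul, Finset.prod_const, ← pow_add,
    Finset.filter_not, Finset.filter_mem_eq_inter, Finset.univ_inter,
    Finset.card_sdiff_add_card_eq_card S.subset_univ, Finset.card_univ]

lemma card_filter_agree_mul_half_pow {κ : Type*} [Fintype κ] [DecidableEq κ] (S : Finset κ)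
    (v : κ → Fin 2) :
    Finset.card {w : κ → Fin 2 | ∀ k ∈ S, w k = v k} * (1 / 2 : ℂ) ^ Fintype.card κ =
      (1 / 2) ^ S.card := by
  have count := congrArg (Nat.cast : ℕ → ℂ) (card_filter_agree_mul S v)
  rw [Fintype.card_fin] at count
  push_cast at count
  rw [one_div, inv_pow, inv_pow, ← count]
  have agreeing_ne_zero := left_ne_zero_of_mul (count.trans_ne (pow_ne_zero _ two_ne_zero))
  field_simp

lemma card_image_univ_of_apply_eq_iff {α β γ : Type*} [Fintype α] [Fintype β] [DecidableEq γ]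
    {f : α → β} (hf : Function.Surjective f) {g : α → γ} (h : ∀ a b, g a = g b ↔ f a = f b) :
    (Finset.univ.image g).card = Fintype.card β := by
  rw [← Finset.card_univ]
  refine (Finset.card_bij (fun b _ => g (Function.surjInv hf b)) (fun b _ => ?_)
    (fun b _ c _ hbc => ?_) fun r hr => ?_).symm
  · exact Finset.mem_image_of_mem _ (Finset.mem_univ _)
  · simpa only [h, Function.surjInv_eq hf] using hbc
  · obtain ⟨a, -, rfl⟩ := Finset.mem_image.1 hr
    exact ⟨f a, Finset.mem_univ _, (h _ _).2 (Function.surjInv_eq hf _)⟩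

namespace Net

section Network

variable {Nq Ns Nm : ℕ} (N : Net Nq Ns Nm)

lemma A1.src_surjective {N : Net Nq Ns Nm} (hA1 : N.A1) : Function.Surjective N.src := fun k => by
  have ⟨q, hq⟩ := Fintype.card_pos_iff.1 (zero_lt_two.trans_le (hA1 k))
  exact ⟨q, hq⟩

lemma A1.exists_ne_src_eq {N : Net Nq Ns Nm} (hA1 : N.A1) (i : Fin Nq) :
    ∃ q, q ≠ i ∧ N.src q = N.src i := by
  have ⟨⟨q, hq⟩, hne⟩ := Fintype.exists_ne_of_one_lt_card (hA1 (N.src i)) ⟨i, rfl⟩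
  exact ⟨q, fun h => hne (Subtype.ext h), hq⟩

lemma ghzVec_apply (x : Fin Nq → Fin 2) :
    N.ghzVec x = if x.FactorsThrough N.src then ((√2 : ℝ) : ℂ)⁻¹ ^ Ns else 0 := by
  have constant_iff : (∀ i, ∃ b : Fin 2, ∀ q, N.src q = i → x q = b) ↔
      x.FactorsThrough N.src := by
    rw [Function.factorsThrough_iff]
    constructor
    · intro h
      choose w hw using h
      exact ⟨w, funext fun q => hw _ q rfl⟩
    · rintro ⟨w, rfl⟩ i
      exact ⟨w i, fun q hq => congrArg w hq⟩
  rw [ghzVec, Finset.prod_ite_zero]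
  simp only [Finset.mem_univ, true_imp_iff, constant_iff, Finset.prod_const, Finset.card_univ,
    Fintype.card_fin]

lemma ghzState_apply (x y : Fin Nq → Fin 2) :
    N.ghzState x y =
      if x.FactorsThrough N.src ∧ y.FactorsThrough N.src then (1 / 2 : ℂ) ^ Ns else 0 := by
  have amplitude_sq : ((√2 : ℝ) : ℂ)⁻¹ * star ((√2 : ℝ) : ℂ)⁻¹ = 1 / 2 := by
    rw [star_inv₀, Complex.star_def, Complex.conj_ofReal, ← mul_inv, ← Complex.ofReal_mul,
      Real.mul_self_sqrt zero_le_two, Complex.ofReal_ofNat, one_div]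
  rw [ghzState, Matrix.of_apply, ghzVec_apply, ghzVec_apply, ite_and]
  split_ifs
  · rw [star_pow, ← mul_pow, amplitude_sq]
  · rw [star_zero, mul_zero]
  · rw [zero_mul]
  · rw [zero_mul]

lemma ghzState_agree_of_src_eq {x y : Fin Nq → Fin 2} (h : N.ghzState x y ≠ 0) {p q : Fin Nq}
    (hpq : N.src p = N.src q) (hq : x q = y q) : x p = y p := by
  rw [ghzState_apply, ite_ne_right_iff] at h
  rw [h.1.1 hpq, h.1.2 hpq, hq]

open scoped ComplexOrder in
lemma posSemidef_ghzState : N.ghzState.PosSemidef :=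
  Matrix.posSemidef_vecMulVec_self_star N.ghzVec

lemma sum_ghzState_diag (hsurj : Function.Surjective N.src) (p : (Fin Nq → Fin 2) → Prop)
    [DecidablePred p] :
    ∑ X with p X, N.ghzState X X =
      Finset.card {w : Fin Ns → Fin 2 | p (w ∘ N.src)} * (1 / 2 : ℂ) ^ Ns := by
  have support_eq : Finset.univ.filter (fun X => p X ∧ X.FactorsThrough N.src) =
      (Finset.univ.filter fun w : Fin Ns → Fin 2 => p (w ∘ N.src)).image (· ∘ N.src) := by
    ext X
    simp only [Finset.mem_filter, Finset.mem_univ, true_and, Finset.mem_image,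
      Function.factorsThrough_iff]
    constructor
    · rintro ⟨hX, w, rfl⟩
      exact ⟨w, hX, rfl⟩
    · rintro ⟨w, hw, rfl⟩
      exact ⟨hw, w, rfl⟩
  simp only [ghzState_apply, and_self]
  rw [← Finset.sum_filter, Finset.filter_filter, Finset.sum_const, nsmul_eq_mul, support_eq,
    Finset.card_image_of_injective _ hsurj.injective_comp_right]

lemma mergePair_eq_iff {i j : Fin Nm} (hij : i ≠ j)
    {x : ({q : Fin Nq // N.node q = i} → Fin 2) × ({q : Fin Nq // N.node q = j} → Fin 2)}
    {z : {q : Fin Nq // N.node q ≠ i ∧ N.node q ≠ j} → Fin 2} {X : Fin Nq → Fin 2} :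
    N.mergePair i j x z = X ↔
      ((x.1 = fun q => X q.1) ∧ x.2 = fun q => X q.1) ∧ z = fun q => X q.1 := by
  constructor
  · rintro rfl
    refine ⟨⟨funext fun q => ?_, funext fun q => ?_⟩, funext fun q => ?_⟩
    · simp [mergePair, q.2]
    · simp [mergePair, q.2, hij.symm]
    · simp [mergePair, q.2.1, q.2.2]
  · rintro ⟨⟨h₁, h₂⟩, rfl⟩
    funext q
    simp only [mergePair, h₁, h₂, dite_eq_ite, ite_self]

lemma reducePair_diag {i j : Fin Nm} (hij : i ≠ j)
    (ρ : Matrix (Fin Nq → Fin 2) (Fin Nq → Fin 2) ℂ)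
    (x : ({q : Fin Nq // N.node q = i} → Fin 2) × ({q : Fin Nq // N.node q = j} → Fin 2)) :
    N.reducePair i j ρ x x = ∑ X with (x.1 = fun q => X q.1) ∧ x.2 = fun q => X q.1, ρ X X := by
  have insert_completion (z) : ρ (N.mergePair i j x z) (N.mergePair i j x z) =
      ∑ X, if N.mergePair i j x z = X then ρ X X else 0 := by
    rw [Finset.sum_ite_eq, if_pos (Finset.mem_univ _)]
  simp only [reducePair, Matrix.of_apply, insert_completion, N.mergePair_eq_iff hij]
  rw [Finset.sum_comm, Finset.sum_filter]
  refine Finset.sum_congr rfl fun X _ => ?_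
  simp only [ite_and _ (_ = _), Finset.sum_ite_irrel, Finset.sum_ite_eq', Finset.mem_univ, if_true,
    Finset.sum_const_zero]

open scoped ComplexOrder in
lemma posSemidef_reducePair {ρ : Matrix (Fin Nq → Fin 2) (Fin Nq → Fin 2) ℂ}
    (hρ : ρ.PosSemidef) (i j : Fin Nm) : (N.reducePair i j ρ).PosSemidef := by
  have sum_eq : N.reducePair i j ρ =
      ∑ z, ρ.submatrix (N.mergePair i j · z) (N.mergePair i j · z) := by
    ext x y
    simp [reducePair, Matrix.sum_apply]
  rw [sum_eq]
  exact Matrix.posSemidef_sum _ fun z _ => hρ.submatrix _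

lemma partialTraceRight_reducePair {i j : Fin Nm} (hij : i ≠ j)
    (ρ : Matrix (Fin Nq → Fin 2) (Fin Nq → Fin 2) ℂ) :
    partialTraceRight (N.reducePair i j ρ) = N.reduceNode i ρ := by
  ext x x'
  simp only [partialTraceRight, reducePair, reduceNode, Matrix.of_apply, ← Fintype.sum_prod_type']
  refine Finset.sum_nbij'
    (fun yz q => if h : N.node q = j then yz.1 ⟨q, h⟩ else yz.2 ⟨q, q.2, h⟩)
    (fun w => (fun q => w ⟨q, fun h => hij (h.symm.trans q.2)⟩, fun q => w ⟨q, q.2.1⟩))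
    (fun _ _ => Finset.mem_univ _) (fun _ _ => Finset.mem_univ _) (fun yz _ => ?_) (fun w _ => ?_)
    fun yz _ => rfl
  · refine Prod.ext (funext fun q => ?_) (funext fun q => ?_)
    · simp only [dif_pos q.2]
    · simp only [dif_neg q.2.2]
  · funext q
    split_ifs <;> rfl

end Network

section SingleQubitNodes

variable {Nq Ns : ℕ} {N : Net Nq Ns Nq} (hnode : ∀ q, N.node q = q) {i j : Fin Nq}

/-- When each qubit is its own node, an assignment at node `i` is the value of the bit `i`. -/
def nodeBit (i : Fin Nq) : ({q : Fin Nq // N.node q = i} → Fin 2) ≃ Fin 2 where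
  toFun x := x ⟨i, hnode i⟩
  invFun b := fun _ => b
  left_inv x := by
    funext ⟨q, hq⟩
    obtain rfl : q = i := (hnode q).symm.trans hq
    rfl
  right_inv _ := rfl

include hnode in
lemma card_nodeBits (i : Fin Nq) :
    Fintype.card ({q : Fin Nq // N.node q = i} → Fin 2) = 2 :=
  (Fintype.card_congr (nodeBit hnode i)).trans (Fintype.card_fin 2)

lemma eq_restrict_iff (x : {q : Fin Nq // N.node q = i} → Fin 2) (X : Fin Nq → Fin 2) :
    (x = fun q => X q.1) ↔ X i = nodeBit hnode i x := by
  rw [← (nodeBit hnode i).injective.eq_iff, eq_comm]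
  rfl

include hnode in
lemma exists_extensions_of_reducePair_ne_zero (hij : i ≠ j)
    {ρ : Matrix (Fin Nq → Fin 2) (Fin Nq → Fin 2) ℂ}
    {x y : ({q : Fin Nq // N.node q = i} → Fin 2) × ({q : Fin Nq // N.node q = j} → Fin 2)}
    (h : N.reducePair i j ρ x y ≠ 0) :
    ∃ X Y, ρ X Y ≠ 0 ∧ (X i = Y i ↔ x.1 = y.1) ∧ (X j = Y j ↔ x.2 = y.2) ∧
      ∀ q, q ≠ i → q ≠ j → X q = Y q := by
  obtain ⟨z, -, hz⟩ := Finset.exists_ne_zero_of_sum_ne_zero h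
  obtain ⟨⟨hxi, hxj⟩, hxz⟩ := (N.mergePair_eq_iff hij (x := x) (z := z)).1 rfl
  obtain ⟨⟨hyi, hyj⟩, hyz⟩ := (N.mergePair_eq_iff hij (x := y) (z := z)).1 rfl
  rw [eq_restrict_iff hnode] at hxi hxj hyi hyj
  refine ⟨_, _, hz, ?_, ?_, fun q hqi hqj => ?_⟩
  · rw [hxi, hyi, (nodeBit hnode i).injective.eq_iff]
  · rw [hxj, hyj, (nodeBit hnode j).injective.eq_iff]
  · exact congrFun (hxz.symm.trans hyz) ⟨q, by rwa [hnode], by rwa [hnode]⟩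

lemma reducePair_ghzState_diag (hsurj : Function.Surjective N.src) (hij : i ≠ j)
    (x : ({q : Fin Nq // N.node q = i} → Fin 2) × ({q : Fin Nq // N.node q = j} → Fin 2)) :
    N.reducePair i j N.ghzState x x =
      Finset.card {w : Fin Ns → Fin 2 |
        w (N.src i) = nodeBit hnode i x.1 ∧ w (N.src j) = nodeBit hnode j x.2} *
      (1 / 2 : ℂ) ^ Ns := by
  simp only [N.reducePair_diag hij, eq_restrict_iff hnode]
  exact N.sum_ghzState_diag hsurj _

lemma reducePair_ghzState_diag_of_src_eq (hsurj : Function.Surjective N.src) (hij : i ≠ j)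
    (hs : N.src i = N.src j)
    (x : ({q : Fin Nq // N.node q = i} → Fin 2) × ({q : Fin Nq // N.node q = j} → Fin 2)) :
    N.reducePair i j N.ghzState x x =
      if nodeBit hnode i x.1 = nodeBit hnode j x.2 then 1 / 2 else 0 := by
  rw [reducePair_ghzState_diag hnode hsurj hij, ← hs]
  split_ifs with hbits
  · simpa [← hbits] using card_filter_agree_mul_half_pow {N.src i} fun _ => nodeBit hnode i x.1
  · have no_assignment : Finset.univ.filter (fun w : Fin Ns → Fin 2 =>
        w (N.src i) = nodeBit hnode i x.1 ∧ w (N.src i) = nodeBit hnode j x.2) = ∅ :=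
      Finset.filter_eq_empty_iff.2 fun w _ hw => hbits (hw.1.symm.trans hw.2)
    rw [no_assignment, Finset.card_empty, Nat.cast_zero, zero_mul]

include hnode in
lemma reducePair_ghzState_diag_of_src_ne (hsurj : Function.Surjective N.src)
    (hs : N.src i ≠ N.src j)
    (x : ({q : Fin Nq // N.node q = i} → Fin 2) × ({q : Fin Nq // N.node q = j} → Fin 2)) :
    N.reducePair i j N.ghzState x x = 1 / 4 := by
  rw [reducePair_ghzState_diag hnode hsurj (ne_of_apply_ne N.src hs)]
  have count := card_filter_agree_mul_half_pow {N.src i, N.src j} fun k =>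
    if k = N.src i then nodeBit hnode i x.1 else nodeBit hnode j x.2
  rw [Finset.card_pair hs] at count
  simp only [Finset.mem_insert, Finset.mem_singleton, forall_eq_or_imp, forall_eq, if_true,
    if_neg hs.symm, Fintype.card_fin] at count
  rw [count]
  norm_num

include hnode in
lemma partialTraceRight_reducePair_ghzState (hsurj : Function.Surjective N.src) (hij : i ≠ j)
    (hs : N.src i = N.src j) :
    partialTraceRight (N.reducePair i j N.ghzState) = maximallyMixed _ := by
  ext x x'
  rw [partialTraceRight, Matrix.of_apply, maximallyMixed_apply, card_nodeBits hnode]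
  split_ifs with hx
  · subst hx
    simp only [reducePair_ghzState_diag_of_src_eq hnode hsurj hij hs, ← Equiv.symm_apply_eq]
    simp
  · refine Finset.sum_eq_zero fun y _ => by_contra fun h => hx ?_
    obtain ⟨X, Y, hXY, agree_i, agree_j, -⟩ := exists_extensions_of_reducePair_ne_zero hnode hij h
    exact agree_i.1 (N.ghzState_agree_of_src_eq hXY hs (agree_j.2 rfl))

include hnode in
lemma reducePair_ghzState_of_src_ne (hA1 : N.A1) (hs : N.src i ≠ N.src j) :
    N.reducePair i j N.ghzState = maximallyMixed _ := by
  have hij : i ≠ j := ne_of_apply_ne N.src hs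
  ext x y
  rw [maximallyMixed_apply, Fintype.card_prod, card_nodeBits hnode, card_nodeBits hnode]
  split_ifs with hxy
  · subst hxy
    rw [reducePair_ghzState_diag_of_src_ne hnode hA1.src_surjective hs]
    norm_num
  · refine by_contra fun h => hxy ?_
    obtain ⟨X, Y, hXY, agree_i, agree_j, agree⟩ :=
      exists_extensions_of_reducePair_ne_zero hnode hij h
    obtain ⟨p, hpi, hp⟩ := hA1.exists_ne_src_eq i
    obtain ⟨q, hqj, hq⟩ := hA1.exists_ne_src_eq j
    have hpj : p ≠ j := ne_of_apply_ne N.src (hp.trans_ne hs)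
    have hqi : q ≠ i := ne_of_apply_ne N.src (hq.trans_ne hs.symm)
    exact Prod.ext (agree_i.1 (N.ghzState_agree_of_src_eq hXY hp.symm (agree p hpi hpj)))
      (agree_j.1 (N.ghzState_agree_of_src_eq hXY hq.symm (agree q hqi hqj)))

include hnode in
lemma reduceNode_ghzState (hA1 : N.A1) (i : Fin Nq) :
    N.reduceNode i N.ghzState = maximallyMixed _ := by
  obtain ⟨q, hqi, hq⟩ := hA1.exists_ne_src_eq i
  rw [← N.partialTraceRight_reducePair hqi.symm,
    partialTraceRight_reducePair_ghzState hnode hA1.src_surjective hqi.symm hq.symm]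

include hnode in
lemma measuredMI_reducePair_of_src_eq (hsurj : Function.Surjective N.src) (hij : i ≠ j)
    (hs : N.src i = N.src j) : measuredMI (N.reducePair i j N.ghzState) = 1 := by
  have perfectly_correlated := measuredMI_eq_logb_card
    (N.posSemidef_reducePair N.posSemidef_ghzState i j)
    (partialTraceRight_reducePair_ghzState hnode hsurj hij hs)
    ((nodeBit hnode i).trans (nodeBit hnode j).symm) fun x => by
      simp only [reducePair_ghzState_diag_of_src_eq hnode hsurj hij hs, Equiv.trans_apply,
        Equiv.symm_apply_eq, card_nodeBits hnode, Nat.cast_ofNat, one_div]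
  rw [perfectly_correlated, card_nodeBits hnode, Nat.cast_ofNat, Real.logb_self_eq_one one_lt_two]

include hnode in
lemma measuredMI_reducePair_of_src_ne (hA1 : N.A1) (hs : N.src i ≠ N.src j) :
    measuredMI (N.reducePair i j N.ghzState) = 0 := by
  rw [reducePair_ghzState_of_src_ne hnode hA1 hs, ← maximallyMixed_kronecker]
  exact measuredMI_kronecker (isHermitian_maximallyMixed _) (trace_maximallyMixed _)
    (trace_maximallyMixed _)

end SingleQubitNodes

end Net

section CharacteristicMatrix

variable {Nq Ns : ℕ} {N : Net Nq Ns Nq} (hnode : ∀ q, N.node q = q) (hA1 : N.A1)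

include hnode hA1

lemma qubitCharMatrix_apply (i j : Fin Nq) :
    qubitCharMatrix N i j = if N.src i = N.src j then 1 else 0 := by
  rw [qubitCharMatrix]
  split_ifs with hij hs hs
  · rw [Net.reduceNode_ghzState hnode hA1, vnEntropy_maximallyMixed, Net.card_nodeBits hnode,
      Nat.cast_ofNat, Real.logb_self_eq_one one_lt_two]
  · exact absurd (congrArg N.src hij) hs
  · exact Net.measuredMI_reducePair_of_src_eq hnode hA1.src_surjective hij hs
  · exact Net.measuredMI_reducePair_of_src_ne hnode hA1 hs

lemma qubitCharMatrix_row_eq_iff (i j : Fin Nq) :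
    qubitCharMatrix N i = qubitCharMatrix N j ↔ N.src i = N.src j := by
  constructor
  · intro h
    have entry_i := congrFun h i
    rw [qubitCharMatrix_apply hnode hA1, qubitCharMatrix_apply hnode hA1, if_pos rfl, eq_comm,
      ite_eq_left_iff] at entry_i
    by_contra hs
    exact zero_ne_one (entry_i (Ne.symm hs))
  · intro hs
    funext k
    simp only [qubitCharMatrix_apply hnode hA1, hs]

end CharacteristicMatrix

/-- for a GHZ network in which each qubit is its own measurement node
(Assumption A2 is then automatic), the qubit characteristic matrix `Q` satisfies:
(i) `Q_{ii} = 1`; (ii) for `i ≠ j`, `Q_{ij} = 1` if `q_i, q_j` share a source and `0`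
otherwise; (iii) two rows agree iff the corresponding qubits share a source; and
(iv) the number of distinct rows equals the number of sources. -/
theorem qubit_characteristic_matrix_determines_topology
    {Nq Ns : ℕ} (N : Net Nq Ns Nq) (hnode : ∀ q, N.node q = q) (hA1 : N.A1) :
    (∀ i, qubitCharMatrix N i i = 1) ∧
    (∀ i j, i ≠ j →
        qubitCharMatrix N i j = if N.src i = N.src j then 1 else 0) ∧
    (∀ i j, (∀ k, qubitCharMatrix N i k = qubitCharMatrix N j k) ↔ N.src i = N.src j) ∧
    (Finset.univ.image (fun i => qubitCharMatrix N i)).card = Ns := by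
  have hrow := qubitCharMatrix_row_eq_iff hnode hA1
  refine ⟨fun i => ?_, fun i j _ => qubitCharMatrix_apply hnode hA1 i j, fun i j => ?_, ?_⟩
  · rw [qubitCharMatrix_apply hnode hA1, if_pos rfl]
  · rw [← funext_iff, hrow]
  · rw [card_image_univ_of_apply_eq_iff hA1.src_surjective hrow, Fintype.card_fin]

end
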